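/- Let R be a commutative ring and M an R-module with a finite presentation R^m → R^n → M → 0 where m ≥ n. Let s be a positive integer and N an R-submodule of M generated by s elements. Then Fitt_{R,0}(M/N) ⊆ Fitt_{R,s}(M). -/

import Mathlib

/-- The `i`-th Fitting ideal attached to a presentation matrix `A` (an `n × m` matrix):
the ideal of `R` generated by all `(n-i) × (n-i)` minors of `A`. -/
def matrixFitt {R : Type*} [CommRing R] {n m : ℕ} (A : Matrix (Fin n) (Fin m) R) (i : ℕ) :
    Ideal R :=
  Ideal.span {x | ∃ (f : Fin (n - i) → Fin n) (g : Fin (n - i) → Fin m),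
    x = Matrix.det (Matrix.of fun a b => A (f a) (g b))}

/-- `A` is a presentation matrix of the `R`-module `M`, i.e. there is an exact sequence
`R^m → R^n → M → 0` with first map given by `A`. -/
def IsPresentation (R M : Type*) [CommRing R] [AddCommGroup M] [Module R M]
    {n m : ℕ} (A : Matrix (Fin n) (Fin m) R) : Prop :=
  ∃ g : (Fin n → R) →ₗ[R] M, Function.Surjective g ∧
    LinearMap.ker g = LinearMap.range (Matrix.toLin' A)

/-!
Let `I_p(K)` be the ideal of `p × p` minors of matrices with columns in `K ⊆ Rⁿ`; only the relation
module `K = ker (Rⁿ → M)` matters, not the chosen relations. On the one hand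
`I_p(K + ⟨x₁, …, xₛ⟩) ⊆ I_{p-s}(K)`, by Cauchy–Binet and Laplace expansion along the columns from
`K`. On the other hand every `(n - i)`-minor with columns in `K` is an `n × n` determinant with
columns in `K + ⟨e_c : c ∈ C⟩` for some `|C| ≤ i`. So the `i`-th Fitting ideal of `M` is the sum of
the zeroth Fitting ideals of the quotients of `M` by `i` elements. A quotient of `M ⧸ N` by `i`
elements is a quotient of `M` by `i + s` elements, and everything reduces to the invariance of the
zeroth Fitting ideal under change of generators.
-/

open Matrix

theorem exists_injective_forall_eq_inl {κ α β : Type*} [Fintype κ] [Fintype β] {g : κ → α ⊕ β}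
    (hg : Function.Injective g) :
    ∃ e : Fin (Fintype.card κ - Fintype.card β) → κ,
      Function.Injective e ∧ ∀ i, ∃ a, g (e i) = Sum.inl a := by
  have hright : Fintype.card {b // (g b).isRight} ≤ Fintype.card β :=
    Fintype.card_le_of_injective (fun b => (g b).getRight b.2) fun b b' hbb' =>
      Subtype.ext <| hg <|
        (Sum.inr_getRight _ b.2).symm.trans <| (congrArg Sum.inr hbb').trans (Sum.inr_getRight _ _)
  have hleft : Fintype.card κ - Fintype.card β ≤ Fintype.card {b // ¬(g b).isRight} := by
    rw [Fintype.card_subtype_compl]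
    omega
  rw [← Fintype.card_fin (Fintype.card κ - Fintype.card β)] at hleft
  obtain ⟨e⟩ := Function.Embedding.nonempty_of_card_le hleft
  exact ⟨fun i => e i, Subtype.val_injective.comp e.injective, fun i =>
    Sum.isLeft_iff.1 (by simpa using (e i).2)⟩

section Determinants

variable {R ι κ : Type*} [CommRing R] [Fintype ι] [Fintype κ] [DecidableEq κ]

theorem det_mul_eq_sum_prod_mul_det_submatrix (A : Matrix κ ι R) (B : Matrix ι κ R) :
    det (A * B) = ∑ g : κ → ι, (∏ b, B (g b) b) * det (A.submatrix id g) := by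
  have hcols : (A * B)ᵀ = fun b => ∑ j, B j b • Aᵀ j := by
    ext b a
    simp [mul_apply, mul_comm]
  calc det (A * B) = detRowAlternating (fun b => ∑ j, B j b • Aᵀ j) := by
        rw [← hcols, ← det_transpose]; rfl
    _ = ∑ g : κ → ι, detRowAlternating (fun b => B (g b) b • Aᵀ (g b)) :=
        detRowAlternating.toMultilinearMap.map_sum _
    _ = ∑ g : κ → ι, (∏ b, B (g b) b) * det (A.submatrix id g) := by
        refine Finset.sum_congr rfl fun g _ => ?_
        rw [← det_transpose (A.submatrix id g), ← smul_eq_mul]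
        exact detRowAlternating.toMultilinearMap.map_smul_univ _ _

theorem det_mul_mem_of_det_submatrix_mem (I : Ideal R) (A : Matrix κ ι R) (B : Matrix ι κ R)
    (h : ∀ g : κ → ι, Function.Injective g → det (A.submatrix id g) ∈ I) : det (A * B) ∈ I := by
  rw [det_mul_eq_sum_prod_mul_det_submatrix]
  refine Ideal.sum_mem _ fun g _ => Ideal.mul_mem_left _ _ ?_
  by_cases hg : Function.Injective g
  · exact h g hg
  · obtain ⟨b, b', hbb', hne⟩ := Function.not_injective_iff.1 hg
    rw [det_zero_of_column_eq hne fun a => by simp [hbb']]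
    exact I.zero_mem

variable [DecidableEq ι]

theorem det_fin_mem_of_row_minors_mem (I : Ideal R) {n : ℕ} (M : Matrix (Fin n) (Fin n) R)
    {e : κ → Fin n} (he : Function.Injective e)
    (h : ∀ c : κ → Fin n, det (M.submatrix e c) ∈ I) : det M ∈ I := by
  induction n with
  | zero =>
    have hbij : Function.Bijective e := ⟨he, fun a => a.elim0⟩
    exact det_submatrix_equiv_self (Equiv.ofBijective e hbij) M ▸ h e
  | succ n ih =>
    by_cases hsurj : Function.Surjective e
    · exact det_submatrix_equiv_self (Equiv.ofBijective e ⟨he, hsurj⟩) M ▸ h e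
    obtain ⟨a, ha⟩ := not_forall.1 hsurj
    have havoid (b : κ) : ∃ b', a.succAbove b' = e b :=
      Fin.exists_succAbove_eq fun hb => ha ⟨b, hb⟩
    choose e' he' using havoid
    rw [det_succ_row M a]
    refine Ideal.sum_mem _ fun j _ => Ideal.mul_mem_left _ _ (ih _ (e := e') ?_ fun c => ?_)
    · exact fun b b' hb => he (by rw [← he', ← he', hb])
    · have hminor := h (j.succAbove ∘ c)
      rwa [← funext he', ← Function.comp_def, ← submatrix_submatrix] at hminor

theorem det_mem_of_row_minors_mem (I : Ideal R) (M : Matrix ι ι R) {e : κ → ι}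
    (he : Function.Injective e) (h : ∀ c : κ → ι, det (M.submatrix e c) ∈ I) : det M ∈ I := by
  let φ := Fintype.equivFin ι
  rw [← det_submatrix_equiv_self φ.symm M]
  refine det_fin_mem_of_row_minors_mem I _ (φ.injective.comp he) fun c => ?_
  simpa [submatrix_submatrix, ← Function.comp_assoc] using h (φ.symm ∘ c)

theorem det_mem_of_col_minors_mem (I : Ideal R) (M : Matrix ι ι R) {e : κ → ι}
    (he : Function.Injective e) (h : ∀ r : κ → ι, det (M.submatrix r e) ∈ I) : det M ∈ I := by
  rw [← det_transpose]
  refine det_mem_of_row_minors_mem I _ he fun r => ?_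
  rw [← transpose_submatrix, det_transpose]
  exact h r

theorem det_of_extend_single {f : κ → ι} (hf : Function.Injective f) (v : κ → ι → R) :
    det (of (Function.extend f v fun c => Pi.single c 1)) = det (of fun b a => v b (f a)) := by
  classical
  set D : Matrix ι ι R := of (Function.extend f v fun c => Pi.single c 1)
  have hsingle {c : ι} (hc : c ∉ Set.range f) : D c = Pi.single c (1 : R) :=
    Function.extend_apply' v (fun c => Pi.single c 1) c hc
  have hcompl : D.toSquareBlockProp (fun c => c ∉ Set.range f) = 1 := by
    ext c d
    simp [toSquareBlockProp, hsingle c.2, one_apply, Pi.single_apply, Subtype.ext_iff, eq_comm]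
  rw [twoBlockTriangular_det D (· ∈ Set.range f), hcompl, det_one, mul_one]
  · let φ : κ ≃ {a // a ∈ Set.range f} := Equiv.ofInjective f hf
    convert (det_submatrix_equiv_self φ (D.toSquareBlockProp (· ∈ Set.range f))).symm using 2
    ext b a
    simp [φ, D, toSquareBlockProp, hf.extend_apply]
  · intro c hc d hd
    rw [hsingle hc, Pi.single_eq_of_ne]
    rintro rfl
    exact hc hd

end Determinants

/-- The ideal of `p × p` minors of all matrices with columns in the submodule `K` of `R^ι`. When
`K` is the range of a matrix `A`, this is the ideal of `p × p` minors of `A`; working with `K`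
makes the independence of the chosen relations automatic. -/
def minorIdeal {R ι : Type*} [CommRing R] (p : ℕ) (K : Submodule R (ι → R)) : Ideal R :=
  Ideal.span {d | ∃ (M : Matrix ι (Fin p) R) (f : Fin p → ι),
    (∀ b, M.col b ∈ K) ∧ d = det (M.submatrix f id)}

namespace minorIdeal

variable {R ι κ σ : Type*} [CommRing R]

theorem le_iff {p : ℕ} {K : Submodule R (ι → R)} {I : Ideal R} :
    minorIdeal p K ≤ I ↔ ∀ (M : Matrix ι (Fin p) R) (f : Fin p → ι),
      (∀ b, M.col b ∈ K) → det (M.submatrix f id) ∈ I := by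
  refine Ideal.span_le.trans ⟨fun h M f hM => h ⟨M, f, hM, rfl⟩, fun h => ?_⟩
  rintro _ ⟨M, f, hM, rfl⟩
  exact h M f hM

theorem det_submatrix_mem [Fintype κ] [DecidableEq κ] {K : Submodule R (ι → R)}
    (M : Matrix ι σ R) (f : κ → ι) (c : κ → σ) (hM : ∀ b, M.col (c b) ∈ K) :
    det (M.submatrix f c) ∈ minorIdeal (Fintype.card κ) K := by
  let φ := (Fintype.equivFin κ).symm
  rw [← det_submatrix_equiv_self φ]
  exact le_iff.1 le_rfl (M.submatrix id (c ∘ φ)) (f ∘ φ) fun b => hM (φ b)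

theorem sup_span_range_le [Fintype σ] (p : ℕ) (K : Submodule R (ι → R)) (x : σ → ι → R) :
    minorIdeal p (K ⊔ Submodule.span R (Set.range x)) ≤ minorIdeal (p - Fintype.card σ) K := by
  classical
  refine le_iff.2 fun M f hM => ?_
  have hdecomp (b : Fin p) : ∃ k ∈ K, ∃ c : σ → R, k + ∑ j, c j • x j = M.col b := by
    obtain ⟨k, hk, y, hy, hky⟩ := Submodule.mem_sup.1 (hM b)
    obtain ⟨c, rfl⟩ := Submodule.mem_span_range_iff_exists_fun R |>.1 hy
    exact ⟨k, hk, c, hky⟩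
  choose k hk c hc using hdecomp
  let A : Matrix ι (Fin p ⊕ σ) R := fromCols (of k)ᵀ (of x)ᵀ
  let C : Matrix (Fin p ⊕ σ) (Fin p) R := fromRows 1 (of c)ᵀ
  have hAC : M = A * C := by
    ext a b
    have hab := congrFun (hc b) a
    simp only [Pi.add_apply, Finset.sum_apply, Pi.smul_apply, smul_eq_mul, col_apply] at hab
    simp [A, C, mul_apply, ← hab, one_apply, mul_comm]
  have hMf : M.submatrix f id = A.submatrix f id * C := by
    rw [hAC]; rfl
  rw [hMf]
  refine det_mul_mem_of_det_submatrix_mem _ _ _ fun g hg => ?_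
  have hinl := exists_injective_forall_eq_inl hg
  rw [Fintype.card_fin] at hinl
  obtain ⟨e, he, hge⟩ := hinl
  refine det_mem_of_col_minors_mem _ _ he fun r => ?_
  simpa using det_submatrix_mem (K := K) A (f ∘ r) (g ∘ e) fun i => by
    obtain ⟨b, hb⟩ := hge i
    rw [Function.comp_apply, hb]
    exact hk b

theorem card_sub_le_of_forall_det_mem [Fintype ι] [DecidableEq ι] {K : Submodule R (ι → R)}
    {I : Ideal R} {i : ℕ}
    (h : ∀ (y : Fin i → ι → R) (D : Matrix ι ι R),
      (∀ c, D.col c ∈ K ⊔ Submodule.span R (Set.range y)) → det D ∈ I) :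
    minorIdeal (Fintype.card ι - i) K ≤ I := by
  classical
  refine le_iff.2 fun M f hM => ?_
  by_cases hf : Function.Injective f
  · have hcard : Fintype.card {a // a ∉ Set.range f} ≤ Fintype.card (Fin i) := by
      have hrange : Fintype.card {a // a ∈ Set.range f} = Fintype.card (Fin _) :=
        Set.card_range_of_injective hf
      rw [Fintype.card_subtype_compl, hrange, Fintype.card_fin, Fintype.card_fin]
      omega
    obtain ⟨j⟩ := Function.Embedding.nonempty_of_card_le hcard
    let y : Fin i → ι → R := Function.extend j (fun a => Pi.single a.1 1) 0
    have hdet := h y (of (Function.extend f M.col fun c => Pi.single c 1))ᵀ fun c => ?_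
    · rwa [det_transpose, det_of_extend_single hf, ← det_transpose] at hdet
    change Function.extend f M.col (fun c => Pi.single c 1) c ∈ _
    by_cases hc : c ∈ Set.range f
    · obtain ⟨b, rfl⟩ := hc
      rw [hf.extend_apply]
      exact Submodule.mem_sup_left (hM b)
    · rw [Function.extend_apply' _ _ _ hc]
      exact Submodule.mem_sup_right
        (Submodule.subset_span ⟨j ⟨c, hc⟩, j.injective.extend_apply _ _ _⟩)
  · obtain ⟨a, a', haa', hne⟩ := Function.not_injective_iff.1 hf
    rw [det_zero_of_row_eq hne (by ext b; simp [haa'])]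
    exact I.zero_mem

end minorIdeal

section Presentations

variable {R M Q ι ι' : Type*} [CommRing R] [AddCommGroup M] [Module R M] [AddCommGroup Q]
  [Module R Q]

theorem comap_span_range_comp {κ : Type*} (q : M →ₗ[R] Q) (z : κ → M) :
    (Submodule.span R (Set.range (q ∘ z))).comap q =
      LinearMap.ker q ⊔ Submodule.span R (Set.range z) := by
  rw [Set.range_comp, ← Submodule.map_span, Submodule.comap_map_eq, sup_comm]

theorem det_mem_minorIdeal_ker [Fintype ι] [Fintype ι'] [DecidableEq ι']
    {g : (ι → R) →ₗ[R] Q} (hg : Function.Surjective g)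
    {g' : (ι' → R) →ₗ[R] Q} (hg' : Function.Surjective g')
    {D : Matrix ι' ι' R} (hD : ∀ c, D.col c ∈ LinearMap.ker g') :
    det D ∈ minorIdeal (Fintype.card ι) (LinearMap.ker g) := by
  classical
  obtain ⟨φ, hφ⟩ := Module.projective_lifting_property g g' hg
  obtain ⟨ψ, hψ⟩ := Module.projective_lifting_property g' g hg'
  let P := LinearMap.toMatrix' φ
  let S := LinearMap.toMatrix' ψ
  let T : Matrix (ι ⊕ ι') (ι ⊕ ι') R := fromBlocks (1 - P * S) (P * D) (-S) D
  -- Adding `P` times the lower block row to the upper one turns `[[1, 0], [-S, D]]` into `T`,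
  -- whose upper rows consist of relations between the generators indexed by `ι`.
  have hdet : det D = det T := by
    have hT : T = fromBlocks 1 P 0 1 * fromBlocks 1 0 (-S) D := by
      simp [T, fromBlocks_multiply, sub_eq_add_neg]
    rw [hT, det_mul, det_fromBlocks_zero₂₁, det_fromBlocks_zero₁₂]
    simp
  have hT : ∀ j, T.toRows₁.col j ∈ LinearMap.ker g := by
    rintro (j | j)
    · have hcol : T.toRows₁.col (Sum.inl j) = Pi.single j 1 - φ (ψ (Pi.single j 1)) := by
        ext a
        simp [T, toRows₁, P, S, ← LinearMap.toMatrix'_comp, LinearMap.toMatrix'_apply, one_apply,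
          Pi.single_apply]
      rw [hcol, LinearMap.mem_ker, map_sub, ← LinearMap.comp_apply g φ, hφ,
        ← LinearMap.comp_apply g' ψ, hψ, sub_self]
    · have hcol : T.toRows₁.col (Sum.inr j) = φ (D.col j) :=
        LinearMap.toMatrix'_mulVec φ (D.col j)
      rw [hcol, LinearMap.mem_ker, ← LinearMap.comp_apply, hφ]
      exact hD j
  rw [hdet]
  exact det_mem_of_row_minors_mem _ _ Sum.inl_injective fun c =>
    minorIdeal.det_submatrix_mem T.toRows₁ id c fun b => hT (c b)

theorem minorIdeal_ker_le_minorIdeal_ker {σ : Type*} [Fintype ι] [Fintype ι'] [Fintype σ]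
    {q : M →ₗ[R] Q} (hq : Function.Surjective q) {x : σ → M}
    (hx : LinearMap.ker q = Submodule.span R (Set.range x))
    {g : (ι → R) →ₗ[R] M} (hg : Function.Surjective g)
    {g' : (ι' → R) →ₗ[R] Q} (hg' : Function.Surjective g') (i : ℕ) :
    minorIdeal (Fintype.card ι' - i) (LinearMap.ker g') ≤
      minorIdeal (Fintype.card ι - (i + Fintype.card σ)) (LinearMap.ker g) := by
  classical
  refine minorIdeal.card_sub_le_of_forall_det_mem fun y D hD => ?_
  obtain ⟨w, rfl⟩ : ∃ w : σ → ι → R, g ∘ w = x := hg.comp_left x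
  obtain ⟨z, hz⟩ : ∃ z : Fin i → ι → R, (q ∘ₗ g) ∘ z = g' ∘ y := (hq.comp hg).comp_left _
  let π := (Submodule.span R (Set.range (g' ∘ y))).mkQ
  have hπ : Function.Surjective π := Submodule.mkQ_surjective _
  have hker' : LinearMap.ker (π ∘ₗ g') = LinearMap.ker g' ⊔ Submodule.span R (Set.range y) := by
    rw [LinearMap.ker_comp, Submodule.ker_mkQ, comap_span_range_comp]
  have hker : LinearMap.ker (π ∘ₗ q ∘ₗ g) =
      LinearMap.ker g ⊔ Submodule.span R (Set.range (Sum.elim z w)) := by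
    rw [LinearMap.ker_comp, Submodule.ker_mkQ, ← hz, comap_span_range_comp, LinearMap.ker_comp, hx,
      comap_span_range_comp, Set.Sum.elim_range, Submodule.span_union, sup_assoc,
      sup_comm (Submodule.span R (Set.range w))]
  have hmem := det_mem_minorIdeal_ker (g := π ∘ₗ q ∘ₗ g) (hπ.comp (hq.comp hg))
    (g' := π ∘ₗ g') (hπ.comp hg') (D := D) (by rwa [hker'])
  rw [hker] at hmem
  simpa using minorIdeal.sup_span_range_le _ _ _ hmem

end Presentations

/-- The `i`-th Fitting ideal of a module, generated by the `(n - i) × (n - i)` minors of the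
relations between `n` generators, for all finite generating families at once; it is `⊥` if the
module is not finitely generated. By `fittingIdeal_eq_minorIdeal` one family is enough. -/
def fittingIdeal (R M : Type*) [CommRing R] [AddCommGroup M] [Module R M] (i : ℕ) : Ideal R :=
  ⨆ (n : ℕ) (g : (Fin n → R) →ₗ[R] M) (_ : Function.Surjective g),
    minorIdeal (n - i) (LinearMap.ker g)

section FittingIdeal

variable {R M : Type*} [CommRing R] [AddCommGroup M] [Module R M]

theorem fittingIdeal_eq_minorIdeal {n : ℕ} {g : (Fin n → R) →ₗ[R] M}
    (hg : Function.Surjective g) (i : ℕ) :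
    fittingIdeal R M i = minorIdeal (n - i) (LinearMap.ker g) := by
  refine le_antisymm (iSup_le fun n' => iSup₂_le fun g' hg' => ?_)
    (le_iSup_of_le n (le_iSup₂_of_le g hg le_rfl))
  simpa using minorIdeal_ker_le_minorIdeal_ker (q := LinearMap.id) Function.surjective_id
    (x := Fin.elim0) (by simp) hg hg' i

theorem matrixFitt_eq_minorIdeal {n m : ℕ} (A : Matrix (Fin n) (Fin m) R) (i : ℕ) :
    matrixFitt A i = minorIdeal (n - i) (LinearMap.range (toLin' A)) := by
  refine le_antisymm (Ideal.span_le.2 ?_) (minorIdeal.le_iff.2 fun D f hD => ?_)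
  · rintro _ ⟨f, c, rfl⟩
    have hminor := minorIdeal.det_submatrix_mem A f c fun b =>
      LinearMap.mem_range.2 ⟨Pi.single (c b) 1, toLin'_apply A _ ▸ A.mulVec_single_one (c b)⟩
    rwa [Fintype.card_fin] at hminor
  · choose y hy using hD
    have hAy : D.submatrix f id = A.submatrix f id * (of y)ᵀ := by
      ext a b
      exact (congrFun (hy b) (f a)).symm
    rw [hAy]
    exact det_mul_mem_of_det_submatrix_mem _ _ _ fun c _ => Ideal.subset_span ⟨f, c, rfl⟩

theorem IsPresentation.matrixFitt_eq_fittingIdeal {n m : ℕ} {A : Matrix (Fin n) (Fin m) R}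
    (hA : IsPresentation R M A) (i : ℕ) : matrixFitt A i = fittingIdeal R M i := by
  obtain ⟨g, hg, hker⟩ := hA
  rw [fittingIdeal_eq_minorIdeal hg, hker, matrixFitt_eq_minorIdeal]

theorem fitt_quotient_le_higher_fitt_general {s : ℕ} (x : Fin s → M) (N : Submodule R M)
    (hN : N = Submodule.span R (Set.range x)) (i : ℕ) :
    fittingIdeal R (M ⧸ N) i ≤ fittingIdeal R M (i + s) := by
  refine iSup_le fun n' => iSup₂_le fun g' hg' => ?_
  have : Module.Finite R (M ⧸ N) := Module.Finite.of_surjective g' hg'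
  have : Module.Finite R N := Module.Finite.iff_fg.2 (hN ▸ Submodule.fg_span (Set.finite_range x))
  have : Module.Finite R M := Module.Finite.of_submodule_quotient N
  obtain ⟨n, g, hg⟩ := Module.Finite.exists_fin' R M
  rw [fittingIdeal_eq_minorIdeal hg]
  simpa using minorIdeal_ker_le_minorIdeal_ker N.mkQ_surjective (N.ker_mkQ.trans hN) hg hg' i

end FittingIdeal

/-- Let `R` be a commutative ring and `M` an `R`-module with a finite presentation
`R^m → R^n → M → 0` where `m ≥ n`.  Let `s` be a positive integer and `N` an `R`-submodule of
`M` generated by `s` elements.  Then `Fitt_{R,0}(M/N) ⊆ Fitt_{R,s}(M)`. -/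
theorem fitt_quotient_le_higher_fitt
    {R M : Type*} [CommRing R] [AddCommGroup M] [Module R M]
    {n m : ℕ} (hnm : n ≤ m) (A : Matrix (Fin n) (Fin m) R) (hA : IsPresentation R M A)
    {s : ℕ} (hs : 0 < s) (x : Fin s → M) (N : Submodule R M)
    (hN : N = Submodule.span R (Set.range x))
    {n' m' : ℕ} (hnm' : n' ≤ m') (B : Matrix (Fin n') (Fin m') R)
    (hB : IsPresentation R (M ⧸ N) B) :
    matrixFitt B 0 ≤ matrixFitt A s := by
  rw [hB.matrixFitt_eq_fittingIdeal, hA.matrixFitt_eq_fittingIdeal]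
  simpa using fitt_quotient_le_higher_fitt_general x N hN 0
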